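/- arXiv:1202.2759 — 2 statements merged into one kernel-verified Lean document; each statement's English description precedes it below -/
import Mathlib

section
/- Let β, τ_u, τ_v, τ_w > 0. Define real sequences (ρ_u(t))_{t≥1} and (ρ_v(t))_{t≥0} by the recursions ρ_u(t+1) = β τ_u τ_v ρ_v(t) / (β τ_u τ_v ρ_v(t) + τ_w) and ρ_v(t+1) = τ_u τ_v ρ_u(t+1) / (τ_u τ_v ρ_u(t+1) + τ_w) for t ≥ 0, from any initial condition ρ_v(0) ∈ (0, 1]. Then, as t → ∞, ρ_u(t) converges to ρ_u* = [β τ_u² τ_v² − τ_w²]₊ / (τ_u τ_v (β τ_u τ_v + τ_w)) and ρ_v(t) converges to ρ_v* = [β τ_u² τ_v² − τ_w²]₊ / (β τ_u τ_v (τ_u τ_v + τ_w)), where [x]₊ = max{0, x}. -/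
/-!
The two recursions compose to a single fractional-linear recursion for `ρv`. With
`k = τu τv`, `a = β k`, `w = τw`, it is `x ↦ a k x / (a (k + w) x + w ^ 2)`, which fixes `0`; hence the
reciprocal `y = 1 / ρv` satisfies the affine recursion `y ↦ r y + c` with `r = w ^ 2 / (a k)` and
`c = (k + w) / k > 0`. If `r < 1` then `y` converges geometrically to `c / (1 - r)`
(`tendsto_affine`), and if `1 ≤ r` then `y` grows at least linearly (`tendsto_affine_atTop`), so
that `ρv` tends to `0`. The limit of `ρu` follows by continuity of `x ↦ a x / (a x + w)`.
-/

open Filter Topology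

theorem tendsto_affine {r c : ℝ} (hr0 : 0 ≤ r) (hr : r < 1) (y : ℕ → ℝ)
    (hy : ∀ n, y (n + 1) = r * y n + c) : Tendsto y atTop (𝓝 (c / (1 - r))) := by
  have h1 : 1 - r ≠ 0 := by linarith
  have key : ∀ n, y n = c / (1 - r) + r ^ n * (y 0 - c / (1 - r)) := by
    intro n
    induction n with
    | zero => simp
    | succ n ih => rw [hy, ih]; field_simp; ring
  have h := ((tendsto_pow_atTop_nhds_zero_of_lt_one hr0 hr).mul_const
    (y 0 - c / (1 - r))).const_add (c / (1 - r))
  rw [zero_mul, add_zero] at h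
  exact h.congr fun n => (key n).symm

theorem tendsto_affine_atTop {r c : ℝ} (hc : 0 < c) (hr : 1 ≤ r) (y : ℕ → ℝ)
    (hpos : ∀ n, 0 < y n) (hy : ∀ n, y (n + 1) = r * y n + c) : Tendsto y atTop atTop := by
  have key : ∀ n : ℕ, (n : ℝ) * c ≤ y n := by
    intro n
    induction n with
    | zero => simpa using (hpos 0).le
    | succ n ih =>
      rw [hy]
      push_cast
      nlinarith [mul_nonneg (sub_nonneg.2 hr) (hpos n).le]
  exact tendsto_atTop_mono key (tendsto_natCast_atTop_atTop.atTop_mul_const hc)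

/-- The limit of a positive solution of the composed recursion for `ρv`. -/
theorem tendsto_composed {a k w : ℝ} (ha : 0 < a) (hk : 0 < k) (hw : 0 < w) (x : ℕ → ℝ)
    (hx : ∀ n, 0 < x n)
    (hrec : ∀ n, x (n + 1) = a * k * x n / (a * (k + w) * x n + w ^ 2)) :
    Tendsto x atTop (𝓝 (max 0 (a * k - w ^ 2) / (a * (k + w)))) := by
  have hak : 0 < a * k := mul_pos ha hk
  have hy : ∀ n, (x (n + 1))⁻¹ = w ^ 2 / (a * k) * (x n)⁻¹ + (k + w) / k := by
    intro n
    have := hx n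
    rw [hrec]
    field_simp
    ring
  rcases lt_or_ge (w ^ 2) (a * k) with h | h
  · have hr : w ^ 2 / (a * k) < 1 := (div_lt_one hak).2 h
    have hlim := tendsto_affine (by positivity) hr (fun n => (x n)⁻¹) hy
    have h1 : 0 < a * k - w ^ 2 := sub_pos.2 h
    have heq : (k + w) / k / (1 - w ^ 2 / (a * k)) = a * (k + w) / (a * k - w ^ 2) := by
      have h2 : 1 - w ^ 2 / (a * k) = (a * k - w ^ 2) / (a * k) := by field_simp
      rw [h2]
      field_simp
    rw [heq] at hlim
    have hinv := hlim.inv₀ (by positivity)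
    rw [max_eq_right h1.le]
    simpa only [inv_inv, inv_div] using hinv
  · have hr : 1 ≤ w ^ 2 / (a * k) := (one_le_div hak).2 h
    have hlim := tendsto_affine_atTop (by positivity) hr (fun n => (x n)⁻¹)
      (fun n => inv_pos.2 (hx n)) hy
    rw [max_eq_left (by linarith), zero_div]
    exact hlim.inv_tendsto_atTop.congr fun n => inv_inv _

/-- **Convergence of the linear state-evolution correlation recursions.**
With `ρ_u(t+1) = βτuτvρ_v(t)/(βτuτvρ_v(t)+τw)` and
`ρ_v(t+1) = τuτvρ_u(t+1)/(τuτvρ_u(t+1)+τw)` from any `ρ_v(0) ∈ (0,1]`, the sequences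
converge to `ρ_u* = [βτu²τv² − τw²]₊/(τuτv(βτuτv+τw))` and
`ρ_v* = [βτu²τv² − τw²]₊/(βτuτv(τuτv+τw))`. -/
theorem stmt4 (β τu τv τw : ℝ) (hβ : 0 < β) (hτu : 0 < τu) (hτv : 0 < τv) (hτw : 0 < τw)
    (ρu ρv : ℕ → ℝ) (hρv0 : ρv 0 ∈ Set.Ioc (0:ℝ) 1)
    (hrecu : ∀ t, ρu (t + 1) = β * τu * τv * ρv t / (β * τu * τv * ρv t + τw))
    (hrecv : ∀ t, ρv (t + 1) = τu * τv * ρu (t + 1) / (τu * τv * ρu (t + 1) + τw)) :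
    Tendsto ρu atTop
      (𝓝 (max 0 (β * τu ^ 2 * τv ^ 2 - τw ^ 2) / (τu * τv * (β * τu * τv + τw)))) ∧
    Tendsto ρv atTop
      (𝓝 (max 0 (β * τu ^ 2 * τv ^ 2 - τw ^ 2) / (β * τu * τv * (τu * τv + τw)))) := by
  have hk : 0 < τu * τv := mul_pos hτu hτv
  have ha : 0 < β * τu * τv := mul_pos (mul_pos hβ hτu) hτv
  -- The problem depends on `β, τu, τv` only through the two products `a` and `k`.
  have hM : β * τu ^ 2 * τv ^ 2 - τw ^ 2 = β * τu * τv * (τu * τv) - τw ^ 2 := by ring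
  rw [hM]
  generalize β * τu * τv = a at *
  generalize τu * τv = k at *
  have hpos : ∀ n, 0 < ρv n := by
    intro n
    induction n with
    | zero => exact hρv0.1
    | succ n ih => rw [hrecv, hrecu]; positivity
  have hv : Tendsto ρv atTop (𝓝 (max 0 (a * k - τw ^ 2) / (a * (k + τw)))) := by
    refine tendsto_composed ha hk hτw ρv hpos fun n => ?_
    have := hpos n
    rw [hrecv, hrecu]
    field_simp
    ring
  refine ⟨?_, hv⟩
  rw [← tendsto_add_atTop_iff_nat 1]
  have hM0 : 0 ≤ max 0 (a * k - τw ^ 2) := le_max_left _ _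
  have hden : a * (max 0 (a * k - τw ^ 2) / (a * (k + τw))) + τw ≠ 0 := by positivity
  have hu := (hv.const_mul a).div ((hv.const_mul a).add_const τw) hden
  have heq : a * (max 0 (a * k - τw ^ 2) / (a * (k + τw))) /
      (a * (max 0 (a * k - τw ^ 2) / (a * (k + τw))) + τw) =
      max 0 (a * k - τw ^ 2) / (k * (a + τw)) := by
    rcases le_total (a * k - τw ^ 2) 0 with h | h
    · simp [max_eq_left h]
    · rw [max_eq_right h] at hden ⊢
      have h1 : a * ((a * k - τw ^ 2) / (a * (k + τw))) + τw = k * (a + τw) / (k + τw) := by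
        field_simp
        ring
      rw [h1]
      field_simp
  rw [heq] at hu
  exact hu.congr fun n => (hrecu n).symm
end

section
/- Let β, τ_u, τ_v, τ_w > 0 and define H(ρ) = β τ_u² τ_v² ρ / ((β τ_u² τ_v² + τ_w τ_u τ_v) ρ + τ_w²) for ρ ∈ [0, 1]. Then H is continuous and monotonically increasing on [0, 1] and maps [0, 1] into [0, 1]. Moreover: if β τ_u² τ_v² ≤ τ_w², then ρ = 0 is the unique solution of H(ρ) = ρ in [0, 1]; and if β τ_u² τ_v² > τ_w², then the solutions of H(ρ) = ρ in [0, 1] are exactly ρ = 0 and ρ = (β τ_u² τ_v² − τ_w²) / (τ_u τ_v (β τ_u τ_v + τ_w)), and for all sufficiently small ρ > 0 one has H(ρ) > ρ. -/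
/-!
With `a = βτu²τv²`, `b = τwτuτv`, `c = τw²`, all positive, the map is the Möbius transformation
`H ρ = aρ / ((a + b)ρ + c)`, whose denominator is positive for `ρ ≥ 0`. Its determinant `ac` is
positive, which gives monotonicity. Everything about fixed points comes from the identity
`H ρ - ρ = ρ ((a - c) - (a + b)ρ) / ((a + b)ρ + c)`: the fixed points are `0` and
`(a - c) / (a + b)`, and `H ρ > ρ` strictly between them.
-/

open Set

/-- **Properties of the one-iteration linear state-evolution map.**
`H(ρ) = βτu²τv²ρ / ((βτu²τv² + τw τu τv)ρ + τw²)` is continuous, monotonically increasing and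
maps `[0,1]` into itself.  If `βτu²τv² ≤ τw²` its only fixed point in `[0,1]` is `0`; if
`βτu²τv² > τw²` its fixed points in `[0,1]` are exactly `0` and
`(βτu²τv² − τw²)/(τuτv(βτuτv + τw))`, and `H(ρ) > ρ` for all sufficiently small `ρ > 0`. -/
theorem stmt5 (β τu τv τw : ℝ) (hβ : 0 < β) (hτu : 0 < τu) (hτv : 0 < τv) (hτw : 0 < τw)
    (H : ℝ → ℝ)
    (hH : ∀ ρ, H ρ =
      β * τu ^ 2 * τv ^ 2 * ρ / ((β * τu ^ 2 * τv ^ 2 + τw * τu * τv) * ρ + τw ^ 2)) :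
    ContinuousOn H (Icc 0 1) ∧
    MonotoneOn H (Icc 0 1) ∧
    MapsTo H (Icc 0 1) (Icc 0 1) ∧
    (β * τu ^ 2 * τv ^ 2 ≤ τw ^ 2 → ∀ ρ ∈ Icc (0:ℝ) 1, (H ρ = ρ ↔ ρ = 0)) ∧
    (τw ^ 2 < β * τu ^ 2 * τv ^ 2 →
      (β * τu ^ 2 * τv ^ 2 - τw ^ 2) / (τu * τv * (β * τu * τv + τw)) ∈ Icc (0:ℝ) 1 ∧
      (∀ ρ ∈ Icc (0:ℝ) 1, (H ρ = ρ ↔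
        ρ = 0 ∨ ρ = (β * τu ^ 2 * τv ^ 2 - τw ^ 2) / (τu * τv * (β * τu * τv + τw)))) ∧
      ∃ δ > 0, ∀ ρ : ℝ, 0 < ρ → ρ < δ → ρ < H ρ) := by
  obtain ⟨a, ha⟩ : ∃ a, a = β * τu ^ 2 * τv ^ 2 := ⟨_, rfl⟩
  obtain ⟨b, hb⟩ : ∃ b, b = τw * τu * τv := ⟨_, rfl⟩
  obtain ⟨c, hc⟩ : ∃ c, c = τw ^ 2 := ⟨_, rfl⟩
  have hden : τu * τv * (β * τu * τv + τw) = a + b := by rw [ha, hb]; ring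
  have ha0 : 0 < a := by rw [ha]; positivity
  have hb0 : 0 < b := by rw [hb]; positivity
  have hc0 : 0 < c := by rw [hc]; positivity
  rw [hden]
  simp only [← ha, ← hb, ← hc] at hH ⊢
  have hab : 0 < a + b := by positivity
  have hD : ∀ ρ : ℝ, 0 ≤ ρ → 0 < (a + b) * ρ + c := fun ρ hρ => by positivity
  have key : ∀ ρ : ℝ, 0 ≤ ρ → (H ρ = ρ ↔ ρ = 0 ∨ (a + b) * ρ = a - c) := by
    intro ρ hρ
    rw [hH, div_eq_iff (hD ρ hρ).ne', ← sub_eq_zero (a := (a + b) * ρ), ← mul_eq_zero]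
    constructor <;> intro h <;> linarith
  refine ⟨?_, ?_, ?_, ?_, ?_⟩
  · rw [funext hH]
    exact ContinuousOn.div (by fun_prop) (by fun_prop) fun ρ hρ => (hD ρ hρ.1).ne'
  · intro x hx y hy hxy
    rw [hH, hH, div_le_div_iff₀ (hD x hx.1) (hD y hy.1)]
    -- the cross terms `a(a + b)xy` cancel, leaving `acx ≤ acy`
    have := mul_le_mul_of_nonneg_left hxy (mul_pos ha0 hc0).le
    linarith
  · intro x hx
    rw [hH]
    have hbx : 0 ≤ b * x := mul_nonneg hb0.le hx.1
    exact ⟨div_nonneg (mul_nonneg ha0.le hx.1) (hD x hx.1).le,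
      (div_le_one (hD x hx.1)).2 (by linarith)⟩
  · intro hac ρ hρ
    rw [key ρ hρ.1]
    refine ⟨?_, Or.inl⟩
    rintro (h | h)
    · exact h
    · have h0 : (a + b) * ρ = 0 := le_antisymm (by linarith) (mul_nonneg hab.le hρ.1)
      exact (mul_eq_zero.1 h0).resolve_left hab.ne'
  · intro hca
    refine ⟨⟨div_nonneg (by linarith) hab.le, (div_le_one hab).2 (by linarith)⟩, ?_,
      (a - c) / (a + b), div_pos (by linarith) hab, ?_⟩
    · intro ρ hρ
      rw [key ρ hρ.1, eq_div_iff hab.ne', mul_comm ρ]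
    · intro ρ h0 h1
      rw [lt_div_iff₀ hab] at h1
      rw [hH, lt_div_iff₀ (hD ρ h0.le)]
      have := mul_pos h0 (sub_pos.2 h1)
      linarith
end
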